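/- Let λ > 0 and ε > 0, and suppose KL(π^λ ‖ q) > ε. Suppose λ' ≥ λ satisfies KL(π^{λ'} ‖ q) = ε. Then π^{λ'} is optimal for the per-state constrained Lagrangian problem: for every probability distribution p on 𝒜 with KL(p ‖ q) ≤ ε, one has Σ_a p(a) A(a) − λ · KL(p ‖ q) ≤ Σ_a π^{λ'}(a) A(a) − λ · KL(π^{λ'} ‖ q). -/

import Mathlib

/-- KL divergence between two distributions on a finite set,
with the convention `0 * log 0 = 0` (automatic in Lean). -/
noncomputable def KL {A : Type*} [Fintype A] (p q : A → ℝ) : ℝ :=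
  ∑ a, p a * Real.log (p a / q a)

/-- Normalization constant `Z_λ = ∑_a q(a) e^{A(a)/λ}`. -/
noncomputable def Zfun {A : Type*} [Fintype A] (q : A → ℝ) (Adv : A → ℝ) (lam : ℝ) : ℝ :=
  ∑ a, q a * Real.exp (Adv a / lam)

/-- The exponentially tilted distribution `π^λ(a) = q(a) e^{A(a)/λ} / Z_λ`. -/
noncomputable def piLam {A : Type*} [Fintype A] (q : A → ℝ) (Adv : A → ℝ) (lam : ℝ)
    (a : A) : ℝ :=
  q a * Real.exp (Adv a / lam) / Zfun q Adv lam

/-!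
Raising the penalty from `λ` to `λ'` changes the objective by a multiple of the divergence:
`L_λ(p) = L_{λ'}(p) + (λ' - λ) KL(p ‖ q)`. The first summand is maximal at `π^{λ'}` over all
distributions, because `L_{λ'}(p) = λ' log Z_{λ'} - λ' KL(p ‖ π^{λ'})`; the second is maximal
there over the feasible set, because `π^{λ'}` saturates the constraint.
-/

section KullbackLeibler

variable {A : Type*} [Fintype A] {p q r : A → ℝ}

theorem sub_le_mul_log_div {x y : ℝ} (hx : 0 ≤ x) (hy : 0 ≤ y) (hyx : y = 0 → x = 0) :
    x - y ≤ x * Real.log (x / y) := by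
  rcases hx.eq_or_lt' with rfl | hx_pos
  · simpa using hy
  have hy_pos : 0 < y := hy.lt_of_ne' fun h => hx_pos.ne' (hyx h)
  calc x - y = x * (1 - (x / y)⁻¹) := by field_simp
    _ ≤ x * Real.log (x / y) :=
      mul_le_mul_of_nonneg_left (Real.one_sub_inv_le_log_of_pos (div_pos hx_pos hy_pos)) hx

theorem KL_nonneg (hp : ∀ a, 0 ≤ p a) (hq : ∀ a, 0 ≤ q a) (hpq : ∀ a, q a = 0 → p a = 0)
    (hsum : ∑ a, q a ≤ ∑ a, p a) : 0 ≤ KL p q :=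
  calc 0 ≤ ∑ a, p a - ∑ a, q a := sub_nonneg.2 hsum
    _ = ∑ a, (p a - q a) := (Finset.sum_sub_distrib ..).symm
    _ ≤ KL p q := Finset.sum_le_sum fun a _ => sub_le_mul_log_div (hp a) (hq a) (hpq a)

theorem KL_self (p : A → ℝ) : KL p p = 0 := by
  refine Finset.sum_eq_zero fun a _ => ?_
  rcases eq_or_ne (p a) 0 with h | h <;> simp [h]

theorem KL_sub_KL (hpq : ∀ a, q a = 0 → p a = 0) (hpr : ∀ a, r a = 0 → p a = 0) :
    KL p q - KL p r = ∑ a, p a * Real.log (r a / q a) := by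
  rw [KL, KL, ← Finset.sum_sub_distrib]
  refine Finset.sum_congr rfl fun a _ => ?_
  rcases eq_or_ne (p a) 0 with hpa | hpa
  · simp [hpa]
  have hqa : q a ≠ 0 := mt (hpq a) hpa
  have hra : r a ≠ 0 := mt (hpr a) hpa
  rw [Real.log_div hpa hqa, Real.log_div hpa hra, Real.log_div hra hqa]
  ring

theorem ne_zero_of_mem_stdSimplex (hp : p ∈ stdSimplex ℝ A) (hpq : ∀ a, q a = 0 → p a = 0) :
    q ≠ 0 := by
  rintro rfl
  have hp_zero : ∑ a, p a = 0 := Finset.sum_eq_zero fun a _ => hpq a rfl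
  exact zero_ne_one (hp_zero.symm.trans hp.2)

end KullbackLeibler

section Gibbs

variable {A : Type*} [Fintype A] {q Adv p : A → ℝ} {lam lam' : ℝ}

theorem Zfun_pos (hq : ∀ a, 0 ≤ q a) (hq_ne : q ≠ 0) : 0 < Zfun q Adv lam := by
  obtain ⟨a, ha⟩ := Function.ne_iff.1 hq_ne
  exact Finset.sum_pos' (fun b _ => mul_nonneg (hq b) (Real.exp_nonneg _))
    ⟨a, Finset.mem_univ a, mul_pos ((hq a).lt_of_ne' ha) (Real.exp_pos _)⟩

theorem piLam_mem_stdSimplex (hq : ∀ a, 0 ≤ q a) (hq_ne : q ≠ 0) :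
    piLam q Adv lam ∈ stdSimplex ℝ A := by
  have hZ : 0 < Zfun q Adv lam := Zfun_pos hq hq_ne
  refine ⟨fun a => div_nonneg (mul_nonneg (hq a) (Real.exp_nonneg _)) hZ.le, ?_⟩
  simp only [piLam, ← Finset.sum_div]
  exact div_self hZ.ne'

theorem piLam_eq_zero_iff (hZ : Zfun q Adv lam ≠ 0) (a : A) :
    piLam q Adv lam a = 0 ↔ q a = 0 := by
  simp [piLam, hZ, Real.exp_ne_zero]

theorem log_piLam_div (hZ : Zfun q Adv lam ≠ 0) {a : A} (ha : q a ≠ 0) :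
    Real.log (piLam q Adv lam a / q a) = Adv a / lam - Real.log (Zfun q Adv lam) := by
  have hratio : piLam q Adv lam a / q a = Real.exp (Adv a / lam) / Zfun q Adv lam := by
    rw [piLam]
    field_simp
  rw [hratio, Real.log_div (Real.exp_ne_zero _) hZ, Real.log_exp]

/-- The per-state Lagrangian `L_λ(p) = ∑_a p(a) A(a) − λ · KL(p ‖ q)`, the objective of the
constrained problem. The distribution `p` comes last, so that `lagrangian q Adv lam` is the
function to be maximized. -/
noncomputable def lagrangian (q Adv : A → ℝ) (lam : ℝ) (p : A → ℝ) : ℝ :=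
  ∑ a, p a * Adv a - lam * KL p q

theorem lagrangian_eq_add_mul_KL (q Adv : A → ℝ) (lam lam' : ℝ) (p : A → ℝ) :
    lagrangian q Adv lam p = lagrangian q Adv lam' p + (lam' - lam) * KL p q := by
  rw [lagrangian, lagrangian]
  ring

theorem lagrangian_eq_sub_mul_KL_piLam (hlam : lam ≠ 0) (hZ : Zfun q Adv lam ≠ 0)
    (hsum : ∑ a, p a = 1) (hpq : ∀ a, q a = 0 → p a = 0) :
    lagrangian q Adv lam p =
      lam * Real.log (Zfun q Adv lam) - lam * KL p (piLam q Adv lam) := by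
  have hlog : ∀ a, p a * Real.log (piLam q Adv lam a / q a) =
      p a * Adv a / lam - p a * Real.log (Zfun q Adv lam) := fun a => by
    rcases eq_or_ne (q a) 0 with ha | ha
    · simp [hpq a ha]
    · rw [log_piLam_div hZ ha]
      ring
  have hKL : KL p q - KL p (piLam q Adv lam) =
      (∑ a, p a * Adv a) / lam - Real.log (Zfun q Adv lam) := by
    rw [KL_sub_KL hpq fun a ha => hpq a ((piLam_eq_zero_iff hZ a).1 ha)]
    simp only [hlog, Finset.sum_sub_distrib, ← Finset.sum_div, ← Finset.sum_mul, hsum, one_mul]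
  rw [lagrangian, eq_add_of_sub_eq hKL]
  field_simp
  ring

theorem lagrangian_le_lagrangian_piLam (hq : ∀ a, 0 ≤ q a) (hlam : 0 < lam)
    (hp : p ∈ stdSimplex ℝ A) (hpq : ∀ a, q a = 0 → p a = 0) :
    lagrangian q Adv lam p ≤ lagrangian q Adv lam (piLam q Adv lam) := by
  have hq_ne : q ≠ 0 := ne_zero_of_mem_stdSimplex hp hpq
  have hZ : Zfun q Adv lam ≠ 0 := (Zfun_pos hq hq_ne).ne'
  have hpi : piLam q Adv lam ∈ stdSimplex ℝ A := piLam_mem_stdSimplex hq hq_ne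
  have hpi_zero := piLam_eq_zero_iff hZ
  have hKL : 0 ≤ KL p (piLam q Adv lam) :=
    KL_nonneg hp.1 hpi.1 (fun a ha => hpq a ((hpi_zero a).1 ha)) (hpi.2.trans hp.2.symm).le
  rw [lagrangian_eq_sub_mul_KL_piLam hlam.ne' hZ hp.2 hpq,
    lagrangian_eq_sub_mul_KL_piLam hlam.ne' hZ hpi.2 fun a => (hpi_zero a).2, KL_self]
  gcongr

/- If `p` is not absolutely continuous with respect to `q`, the divergence is infinite, whereas
`KL` drops the terms with `q a = 0`, since `x / 0 = 0` and `log 0 = 0`. -/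
theorem gibbs_constrained_optimal_general (hq : ∀ a, 0 ≤ q a) (hlam' : 0 < lam')
    (hle : lam ≤ lam') (hp : p ∈ stdSimplex ℝ A) (hpq : ∀ a, q a = 0 → p a = 0)
    (hKL : KL p q ≤ KL (piLam q Adv lam') q) :
    lagrangian q Adv lam p ≤ lagrangian q Adv lam (piLam q Adv lam') := by
  rw [lagrangian_eq_add_mul_KL q Adv lam lam' p,
    lagrangian_eq_add_mul_KL q Adv lam lam' (piLam q Adv lam')]
  exact add_le_add (lagrangian_le_lagrangian_piLam hq hlam' hp hpq)
    (mul_le_mul_of_nonneg_left hKL (sub_nonneg.2 hle))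

end Gibbs

/-- Per-state constrained Lagrangian problem: when `KL(π^λ ‖ q) > ε` and `λ' ≥ λ` is such
that `KL(π^{λ'} ‖ q) = ε`, the distribution `π^{λ'}` maximizes
`p ↦ ∑_a p(a) A(a) − λ · KL(p ‖ q)` over distributions `p` with `KL(p ‖ q) ≤ ε`. -/
theorem gibbs_constrained_optimal
    {A : Type*} [Fintype A] [Nonempty A]
    (q : A → ℝ) (hqpos : ∀ a, 0 < q a) (hqsum : ∑ a, q a = 1)
    (Adv : A → ℝ) (lam lam' ε : ℝ) (hlam : 0 < lam) (hε : 0 < ε)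
    (hviol : ε < KL (piLam q Adv lam) q)
    (hle : lam ≤ lam')
    (hbind : KL (piLam q Adv lam') q = ε) :
    ∀ p : A → ℝ, (∀ a, 0 ≤ p a) → ∑ a, p a = 1 → KL p q ≤ ε →
      ∑ a, p a * Adv a - lam * KL p q ≤
        ∑ a, piLam q Adv lam' a * Adv a - lam * KL (piLam q Adv lam') q := by
  intro p hp hsum hKL
  exact gibbs_constrained_optimal_general (fun a => (hqpos a).le) (hlam.trans_le hle) hle
    ⟨hp, hsum⟩ (fun a ha => absurd ha (hqpos a).ne') (hKL.trans_eq hbind.symm)
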